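/- arXiv:1109.3137 — 2 statements merged into one kernel-verified Lean document; each statement's English description precedes it below -/
import Mathlib

section
/- If a locally finite edge-weighted graph G has finite volume, i.e. the sum of all edge lengths is finite, then the metric completion of G with respect to the path metric is weakly connected. -/
open UniformSpace Filter Topology
open scoped ENNReal

noncomputable section

/-- A locally finite edge-weighted (resistance) graph. -/
structure WGraph (V : Type*) where
  Adj : V → V → Prop
  symm : ∀ u v, Adj u v → Adj v u
  loopless : ∀ v, ¬ Adj v v
  R : V → V → ℝ
  Rsymm : ∀ u v, R u v = R v u
  Rpos : ∀ u v, Adj u v → 0 < R u v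
  locFin : ∀ v, {u | Adj u v}.Finite

namespace WGraph

variable {V : Type*} (G : WGraph V)

/-- The set of edges, as unordered pairs of vertices. -/
def edgeSet : Set (Sym2 V) := {e | ∃ u v, G.Adj u v ∧ e = s(u, v)}

/-- The set of total lengths of finite paths joining `u` to `v`. -/
def pathLengths (u v : V) : Set ℝ :=
  {L | ∃ (n : ℕ) (p : ℕ → V), p 0 = u ∧ p n = v ∧
        (∀ k < n, G.Adj (p k) (p (k + 1))) ∧
        L = ∑ k ∈ Finset.range n, G.R (p k) (p (k + 1))}

/-- `G` is connected: any two vertices are joined by a finite path. -/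
def Connected : Prop := ∀ u v : V, (G.pathLengths u v).Nonempty

/-- The metric on the vertex set is the minimal resistance path metric of `G`. -/
def IsPathMetric [MetricSpace V] : Prop :=
  ∀ u v : V, dist u v = sInf (G.pathLengths u v)

/-- Eventually flat functions: the values differ across only finitely many edges. -/
def EventuallyFlat (φ : V → ℝ) : Prop :=
  {p : V × V | G.Adj p.1 p.2 ∧ φ p.1 ≠ φ p.2}.Finite

open Classical in
/-- The conductance: the reciprocal resistance on edges, `0` off edges. -/
def cond (u v : V) : ℝ := if G.Adj u v then (G.R u v)⁻¹ else 0

/-- `f` is harmonic at `v`: its value is the conductance-weighted average of the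
values at the adjacent vertices. -/
def HarmonicAt (f : V → ℝ) (v : V) : Prop :=
  f v = (∑ u ∈ (G.locFin v).toFinset, G.cond u v)⁻¹ *
          ∑ u ∈ (G.locFin v).toFinset, G.cond u v * f u

/-- The weighted `ℓ²(μ)` inner product. -/
def winner (μ : V → ℝ) (f g : V → ℝ) : ℝ := ∑' v, f v * g v * μ v

/-- The bilinear (energy) form associated to conductances `C`. -/
def Bform (C : V → V → ℝ) (f g : V → ℝ) : ℝ :=
  (1 / 2) * ∑' p : V × V, C p.1 p.2 * (f p.1 - f p.2) * (g p.1 - g p.2)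

/-- The formal Laplacian `Δ_μ`. -/
def lap (C : V → V → ℝ) (μ : V → ℝ) (f : V → ℝ) (v : V) : ℝ :=
  (1 / μ v) * ∑' u, C u v * (f v - f u)

/-- The (possibly infinite) energy of `f`. -/
def energy (C : V → V → ℝ) (f : V → ℝ) : ℝ≥0∞ :=
  (1 / 2) * ∑' p : V × V, ENNReal.ofReal (C p.1 p.2 * (f p.1 - f p.2) ^ 2)

variable [MetricSpace V]

/-- A path in the completion `Ḡ` joining `x` and `y`: a two-sided sequence of
vertices (stationary steps are allowed, so this encodes finite paths, rays and
double rays) converging to `x` and `y` at its two ends. -/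
structure CPath (x y : Completion V) where
  p : ℤ → V
  step : ∀ k, p k = p (k + 1) ∨ G.Adj (p k) (p (k + 1))
  tendsto_left : Tendsto (fun n : ℕ => ((p (-(n : ℤ)) : V) : Completion V)) atTop (nhds x)
  tendsto_right : Tendsto (fun n : ℕ => ((p (n : ℤ) : V) : Completion V)) atTop (nhds y)

end WGraph

/-- The path `γ` uses (contains) the edge `e`. -/
def WGraph.CPath.uses {V : Type*} [MetricSpace V] {G : WGraph V}
    {x y : Completion V} (γ : G.CPath x y) (e : Sym2 V) : Prop :=
  ∃ k : ℤ, γ.p k ≠ γ.p (k + 1) ∧ e = s(γ.p k, γ.p (k + 1))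

namespace WGraph

variable {V : Type*} (G : WGraph V) [MetricSpace V]

/-- The completion `Ḡ` is weakly connected: any two distinct points admit a
finite set of edges met by every path joining them. -/
def WeaklyConnected : Prop :=
  ∀ x y : Completion V, x ≠ y →
    ∃ W : Set (Sym2 V), W.Finite ∧ W ⊆ G.edgeSet ∧
      ∀ γ : G.CPath x y, ∃ e ∈ W, γ.uses e

end WGraph


/-- a locally finite edge-weighted graph of finite volume has a
weakly connected completion. -/
theorem finiteVolume_weaklyConnected {V : Type*} [MetricSpace V] [Countable V]
    (G : WGraph V) (hmet : G.IsPathMetric) (hconn : G.Connected)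
    (hvol : ∑' e : G.edgeSet, ENNReal.ofReal (Sym2.lift ⟨G.R, G.Rsymm⟩ (e : Sym2 V)) ≠ ⊤) :
    G.WeaklyConnected := by
  intro x y hxy
  have hD : 0 < dist x y := dist_pos.mpr hxy
  set f : V → ℝ := fun v => dist x (v : Completion V) with hf
  have hlip : ∀ u v, G.Adj u v → |f v - f u| ≤ G.R u v := by
    intro u v huv
    have h1 : |f v - f u| ≤ dist u v := by
      have := abs_dist_sub_le (v : Completion V) (u : Completion V) x
      rw [Completion.dist_eq, dist_comm v u] at this
      simpa [hf, dist_comm] using this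
    refine h1.trans ?_
    rw [hmet u v]
    refine csInf_le ⟨0, ?_⟩ ?_
    · rintro L ⟨n, p, -, -, hp, rfl⟩
      exact Finset.sum_nonneg fun k hk => (G.Rpos _ _ (hp k (Finset.mem_range.mp hk))).le
    · refine ⟨1, fun k => if k = 0 then u else v, by simp, by simp, ?_, by simp⟩
      intro k hk
      obtain rfl : k = 0 := by omega
      simpa using huv
  let S : G.edgeSet → Set ℝ := fun e =>
    {r | ∃ u v, (e : Sym2 V) = s(u, v) ∧ r ∈ Set.uIcc (f u) (f v)}
  have hS : ∀ e : G.edgeSet, MeasureTheory.volume (S e) ≤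
      ENNReal.ofReal (Sym2.lift ⟨G.R, G.Rsymm⟩ (e : Sym2 V)) := by
    rintro ⟨e, a, b, hab, rfl⟩
    have hsub : S ⟨s(a, b), a, b, hab, rfl⟩ ⊆ Set.uIcc (f a) (f b) := by
      rintro r ⟨u, v, he, hr⟩
      rcases Sym2.eq_iff.mp he with ⟨rfl, rfl⟩ | ⟨rfl, rfl⟩
      · exact hr
      · rwa [Set.uIcc_comm]
    refine (MeasureTheory.measure_mono hsub).trans ?_
    rw [Real.volume_interval]
    exact ENNReal.ofReal_le_ofReal (hlip a b hab)
  have hfin := MeasureTheory.ae_finite_setOfPred_mem (μ := MeasureTheory.volume) (s := S)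
    (ne_top_of_le_ne_top hvol (ENNReal.tsum_le_tsum hS))
  obtain ⟨r, hr, hr0, hrD⟩ : ∃ r, {i | r ∈ S i}.Finite ∧ 0 < r ∧ r < dist x y := by
    by_contra hcon
    push Not at hcon
    have hsub : Set.Ioo 0 (dist x y) ⊆ {r | ¬ {i | r ∈ S i}.Finite} := by
      intro r hr h
      exact absurd hr.2 (not_lt.mpr (hcon r h hr.1))
    have h0 := MeasureTheory.measure_mono_null hsub (MeasureTheory.ae_iff.mp hfin)
    rw [Real.volume_Ioo, ENNReal.ofReal_eq_zero] at h0
    linarith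
  refine ⟨Subtype.val '' {i | r ∈ S i}, hr.image _, ?_, ?_⟩
  · rintro _ ⟨e, -, rfl⟩
    exact e.2
  intro γ
  have hl : Tendsto (fun n : ℕ => f (γ.p (-(n : ℤ)))) atTop (nhds (dist x x)) :=
    tendsto_const_nhds.dist γ.tendsto_left
  have hrt : Tendsto (fun n : ℕ => f (γ.p (n : ℤ))) atTop (nhds (dist x y)) :=
    tendsto_const_nhds.dist γ.tendsto_right
  rw [dist_self] at hl
  obtain ⟨N, hN⟩ := (hl.eventually_lt_const hr0).exists
  obtain ⟨M, hM⟩ := (hrt.eventually_const_lt hrD).exists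
  obtain ⟨k, hk1, hk2⟩ : ∃ k : ℤ, f (γ.p k) < r ∧ r ≤ f (γ.p (k + 1)) := by
    by_contra hcon
    push Not at hcon
    have key : ∀ n : ℕ, f (γ.p (-(N : ℤ) + n)) < r := by
      intro n
      induction n with
      | zero => simpa using hN
      | succ n ih =>
        have := hcon _ ih
        push_cast
        rwa [← add_assoc]
    have := key (N + M)
    rw [show -(N : ℤ) + ((N + M : ℕ) : ℤ) = M by push_cast; ring] at this
    exact lt_asymm hM this
  have hne : γ.p k ≠ γ.p (k + 1) := by
    intro h
    rw [← h] at hk2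
    exact absurd hk1 (not_lt.mpr hk2)
  have hadj := (γ.step k).resolve_left hne
  exact ⟨s(γ.p k, γ.p (k + 1)), ⟨⟨_, _, _, hadj, rfl⟩,
    ⟨_, _, rfl, Set.mem_uIcc.mpr (Or.inl ⟨hk1.le, hk2⟩)⟩, rfl⟩, k, hne, rfl⟩
end
end

section
/- If G is connected with finite diameter and f lies in H¹₀(μ), the closure in H¹(μ) of the finitely supported functions, then the unique continuous extension of f to the completion Ḡ vanishes at every point of Ḡ \ G. -/
open UniformSpace Filter Topology
open scoped ENNReal

noncomputable section

theorem aux_simple_path {V : Type*} (G : WGraph V) (u v : V) (L : ℝ)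
    (h : ∃ l ∈ G.pathLengths u v, l ≤ L) :
    ∃ (n : ℕ) (p : ℕ → V), p 0 = u ∧ p n = v ∧
        (∀ k < n, G.Adj (p k) (p (k + 1))) ∧
        (∑ k ∈ Finset.range n, G.R (p k) (p (k + 1))) ≤ L ∧
        ∀ i j, i < j → j < n → p i ≠ p j := by
  classical
  have hex : ∃ n : ℕ, ∃ p : ℕ → V, p 0 = u ∧ p n = v ∧
        (∀ k < n, G.Adj (p k) (p (k + 1))) ∧
        (∑ k ∈ Finset.range n, G.R (p k) (p (k + 1))) ≤ L := by
    obtain ⟨l, ⟨n, p, h0, h1, h2, rfl⟩, hl⟩ := h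
    exact ⟨n, p, h0, h1, h2, hl⟩
  obtain ⟨p, h0, h1, h2, h3⟩ := Nat.find_spec hex
  have hmin := fun m hm => Nat.find_min hex (m := m) hm
  generalize Nat.find hex = n at *
  refine ⟨n, p, h0, h1, h2, h3, ?_⟩
  intro i j hij hjn heq
  obtain ⟨m, rfl⟩ := Nat.exists_eq_add_of_lt hij
  obtain ⟨r, rfl⟩ := Nat.exists_eq_add_of_lt hjn
  refine hmin (i + (r + 1)) (by omega) ⟨fun k => if k < i then p k else p (k + (m + 1)), ?_, ?_, ?_, ?_⟩
  · by_cases hi : 0 < i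
    · simp [hi, h0]
    · obtain rfl : i = 0 := by omega
      simp only [lt_irrefl, if_false]
      rw [← h0, heq]
      congr 1
  · simp only [show ¬ (i + (r + 1) < i) by omega, if_false]
    rw [← h1]; congr 1; omega
  · intro k hk
    by_cases hki : k + 1 < i
    · simp only [hki, show k < i by omega, if_true]
      exact h2 k (by omega)
    · by_cases hk2 : k < i
      · simp only [hki, hk2, if_true, if_false]
        have : k + 1 = i := by omega
        have h5 := h2 k (by omega)
        rw [this, heq] at h5
        rw [this]; exact h5
      · simp only [hki, hk2, if_false]
        have h5 := h2 (k + (m + 1)) (by omega)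
        rwa [show k + (m + 1) + 1 = k + 1 + (m + 1) by omega] at h5
  · refine le_trans ?_ h3
    rw [show i + m + 1 + r + 1 = i + ((m + 1) + (r + 1)) by omega, Finset.sum_range_add,
      Finset.sum_range_add _ i, Finset.sum_range_add _ (m + 1)]
    have hA : ∑ k ∈ Finset.range i, G.R (if k < i then p k else p (k + (m + 1)))
        (if k + 1 < i then p (k + 1) else p (k + 1 + (m + 1))) =
        ∑ k ∈ Finset.range i, G.R (p k) (p (k + 1)) := by
      refine Finset.sum_congr rfl fun k hk => ?_
      have hk := Finset.mem_range.1 hk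
      rw [if_pos hk]
      by_cases hki : k + 1 < i
      · rw [if_pos hki]
      · rw [if_neg hki]
        have : k + 1 = i := by omega
        rw [this, heq]
        rfl
    have hB : ∑ k ∈ Finset.range (r + 1),
        G.R (if i + k < i then p (i + k) else p (i + k + (m + 1)))
        (if i + k + 1 < i then p (i + k + 1) else p (i + k + 1 + (m + 1))) =
        ∑ k ∈ Finset.range (r + 1), G.R (p (i + (m + 1 + k))) (p (i + (m + 1 + k) + 1)) := by
      refine Finset.sum_congr rfl fun k hk => ?_
      rw [if_neg (by omega), if_neg (by omega)]
      congr 2 <;> omega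
    have hC : 0 ≤ ∑ k ∈ Finset.range (m + 1), G.R (p (i + k)) (p (i + k + 1)) := by
      refine Finset.sum_nonneg fun k hk => ?_
      have hk := Finset.mem_range.1 hk
      exact (G.Rpos _ _ (h2 _ (by omega))).le
    rw [hA, hB]
    linarith

theorem aux_energy_bound {V : Type*} (G : WGraph V) (u v : V) (L : ℝ)
    (h : ∃ l ∈ G.pathLengths u v, l ≤ L) (g : V → ℝ) (e : ℝ) (he : 0 ≤ e)
    (hg : WGraph.energy G.cond g ≤ ENNReal.ofReal e) :
    (g v - g u) ^ 2 ≤ L * (2 * e) := by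
  classical
  obtain ⟨n, p, h0, h1, h2, h3, hinj⟩ := aux_simple_path G u v L h
  have hsum : ∑ k ∈ Finset.range n, (g (p (k + 1)) - g (p k)) = g v - g u := by
    rw [Finset.sum_range_sub (fun k => g (p k)), h0, h1]
  have hR : ∀ k ∈ Finset.range n, 0 < G.R (p k) (p (k + 1)) := fun k hk =>
    G.Rpos _ _ (h2 k (Finset.mem_range.1 hk))
  have hc : ∀ k ∈ Finset.range n, G.cond (p k) (p (k + 1)) = (G.R (p k) (p (k + 1)))⁻¹ := by
    intro k hk
    simp [WGraph.cond, h2 k (Finset.mem_range.1 hk)]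
  have hc0 : ∀ k ∈ Finset.range n,
      0 ≤ G.cond (p k) (p (k + 1)) * (g (p k) - g (p (k + 1))) ^ 2 := by
    intro k hk
    rw [hc k hk]
    have := hR k hk
    positivity
  have hCS := Finset.sum_sq_le_sum_mul_sum_of_sq_eq_mul (Finset.range n)
    (r := fun k => g (p (k + 1)) - g (p k))
    (f := fun k => G.R (p k) (p (k + 1)))
    (g := fun k => G.cond (p k) (p (k + 1)) * (g (p k) - g (p (k + 1))) ^ 2)
    (fun k hk => (hR k hk).le) hc0
    (fun k hk => by
      have := hR k hk
      rw [hc k hk]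
      field_simp
      ring)
  rw [hsum] at hCS
  have hen : ∑ k ∈ Finset.range n, G.cond (p k) (p (k + 1)) * (g (p k) - g (p (k + 1))) ^ 2
      ≤ 2 * e := by
    rw [← ENNReal.ofReal_le_ofReal_iff (by positivity), ENNReal.ofReal_sum_of_nonneg hc0]
    have hi : Set.InjOn (fun k => (p k, p (k + 1))) (Finset.range n : Set ℕ) := by
      intro a ha b hb hab
      have ha := Finset.mem_range.1 ha
      have hb := Finset.mem_range.1 hb
      have hab : p a = p b := congrArg Prod.fst hab
      rcases lt_trichotomy a b with h | h | h
      · exact absurd hab (hinj a b h hb)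
      · exact h
      · exact absurd hab.symm (hinj b a h ha)
    have hle := ENNReal.sum_le_tsum (f := fun q : V × V =>
      ENNReal.ofReal (G.cond q.1 q.2 * (g q.1 - g q.2) ^ 2))
      ((Finset.range n).image (fun k => (p k, p (k + 1))))
    rw [Finset.sum_image hi] at hle
    refine hle.trans ?_
    unfold WGraph.energy at hg
    rw [ENNReal.ofReal_mul (by norm_num)]
    calc _ = 2 * ((1 / 2) * ∑' q : V × V,
          ENNReal.ofReal (G.cond q.1 q.2 * (g q.1 - g q.2) ^ 2)) := by
          rw [← mul_assoc, one_div, ENNReal.mul_inv_cancel (by norm_num) (by norm_num), one_mul]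
      _ ≤ 2 * ENNReal.ofReal e := by gcongr
      _ = _ := by norm_num
  calc _ ≤ _ := hCS
    _ ≤ L * (2 * e) := by
      refine mul_le_mul h3 hen (Finset.sum_nonneg hc0) ?_
      exact (Finset.sum_nonneg fun k hk => (hR k hk).le).trans h3

/-- on a connected graph of finite diameter, a function in
`H¹₀(μ)` (an `H¹`-limit of finitely supported functions) has continuous
extension vanishing at every point of the graph boundary `Ḡ \ G`. -/
theorem h10_vanishes_on_boundary {V : Type*} [MetricSpace V] [Countable V]
    (G : WGraph V) (hmet : G.IsPathMetric) (hconn : G.Connected)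
    (μ : V → ℝ) (hμ : ∀ v, 0 < μ v)
    (D : ℝ) (hD : ∀ u v : V, dist u v ≤ D)
    (f : V → ℝ) (hf2 : Summable fun v => f v ^ 2 * μ v)
    (hE : WGraph.energy G.cond f ≠ ⊤)
    (fs : ℕ → V → ℝ) (hfs : ∀ n, (Function.support (fs n)).Finite)
    (hconv : Filter.Tendsto
      (fun n => (∑' v, ENNReal.ofReal ((fs n v - f v) ^ 2 * μ v)) +
        WGraph.energy G.cond (fun v => fs n v - f v))
      Filter.atTop (nhds 0))
    (Φ : UniformSpace.Completion V → ℝ) (hΦcont : Continuous Φ)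
    (hΦext : ∀ v : V, Φ ↑v = f v) :
    ∀ x : UniformSpace.Completion V,
      x ∉ Set.range ((↑) : V → UniformSpace.Completion V) → Φ x = 0 := by
  intro x hx
  have hne : Nonempty V := by
    by_contra hV
    rw [not_nonempty_iff] at hV
    have := (UniformSpace.Completion.denseRange_coe (α := V)).closure_range
    rw [Set.range_eq_empty, closure_empty] at this
    exact absurd (Set.mem_univ x) (this ▸ Set.notMem_empty x)
  obtain ⟨u₀⟩ := hne
  have hD0 : 0 ≤ D := dist_nonneg.trans (hD u₀ u₀)
  have hm := hμ u₀
  have key : ∀ e : ℝ, 0 < e → Φ x ^ 2 ≤ e * (2 / μ u₀ + 4 * (D + 1)) := by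
    intro e he
    have hev := hconv.eventually (Iic_mem_nhds (ENNReal.ofReal_pos.2 he))
    obtain ⟨n, hn⟩ := hev.exists
    have hn : _ ≤ ENNReal.ofReal e := hn
    have h1 := le_self_add.trans hn
    have h2 := le_add_self.trans hn
    have h3 := (ENNReal.le_tsum u₀).trans h1
    rw [ENNReal.ofReal_le_ofReal_iff he.le, ← le_div_iff₀ hm] at h3
    have hbd : ∀ u, (fs n u - f u) ^ 2 ≤ e * (2 / μ u₀ + 4 * (D + 1)) := by
      intro u
      have hp : ∃ l ∈ G.pathLengths u₀ u, l ≤ D + 1 := by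
        have : sInf (G.pathLengths u₀ u) < D + 1 := by
          rw [← hmet]; linarith [hD u₀ u]
        obtain ⟨l, hl, hl'⟩ := exists_lt_of_csInf_lt (hconn u₀ u) this
        exact ⟨l, hl, hl'.le⟩
      have h4 := aux_energy_bound G u₀ u (D + 1) hp _ e he.le h2
      have h5 : e * (2 / μ u₀ + 4 * (D + 1)) = 2 * (e / μ u₀) + 2 * ((D + 1) * (2 * e)) := by ring
      rw [h5]
      nlinarith [sq_nonneg ((fs n u - f u) - 2 * (fs n u₀ - f u₀))]
    set S : Set (UniformSpace.Completion V) := (↑) '' Function.support (fs n) with hS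
    have hSc : IsClosed S := ((hfs n).image _).isClosed
    have hxS : x ∉ S := fun ⟨v, _, hv⟩ => hx ⟨v, hv⟩
    have hcl : x ∈ closure (Sᶜ ∩ Set.range ((↑) : V → UniformSpace.Completion V)) := by
      refine (UniformSpace.Completion.denseRange_coe (α := V)).open_subset_closure_inter
        hSc.isOpen_compl hxS
    have hcl2 : IsClosed {y | Φ y ^ 2 ≤ e * (2 / μ u₀ + 4 * (D + 1))} :=
      isClosed_le (by fun_prop) continuous_const
    refine closure_minimal ?_ hcl2 hcl
    rintro _ ⟨hy, v, rfl⟩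
    have hv : fs n v = 0 := by
      by_contra h
      exact hy ⟨v, h, rfl⟩
    have := hbd v
    simpa [hΦext, hv] using this
  have hK : 0 < 2 / μ u₀ + 4 * (D + 1) := by positivity
  have : Φ x ^ 2 ≤ 0 := by
    refine le_of_forall_pos_le_add fun ε hε => ?_
    have := key (ε / (2 / μ u₀ + 4 * (D + 1))) (by positivity)
    rw [div_mul_cancel₀ _ hK.ne'] at this
    linarith
  exact pow_eq_zero_iff (two_ne_zero) |>.1 (le_antisymm this (sq_nonneg _))
end
end
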